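/- arXiv:2207.01956 — 3 statements merged into one kernel-verified Lean document; each statement's English description precedes it below -/
import Mathlib

section
/- Let G be a group, H a subgroup of G, and d a bounded right invariant pseudometric on G. Then the function d′ defined by d′(x,y) := d̃(Hx⁻¹, Hy⁻¹) is a left invariant pseudometric on G, is constant on left cosets of H in each variable (d′(xh, yk) = d′(x,y) for all x,y ∈ G and h,k ∈ H), and satisfies |d̃(H, xH) − d̃(H, yH)| ≤ d′(x,y) for all x, y ∈ G. -/
/-!
`dTil d A B` is the Hausdorff distance attached to the point-to-set distance
`⨅ b : B, d a b`. The one estimate behind the result is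
`iInf_le_iInf_add_dTil`: the distance from a point to `C` is at most its distance to `B` plus
`dTil d B C`. Taking suprema over the point gives the triangle inequality for `dTil`.

Left invariance of `d'` comes from `H (a x)⁻¹ = (H x⁻¹) a⁻¹` and the right invariance of `d`;
constancy on left cosets from `H (x h)⁻¹ = H x⁻¹`. For the last inequality, right invariance lets
`H` act on the right simultaneously on `H` and `x H`, so that `dTil d H (x H)` collapses to the
distance from the point `x` to `H`, that is, the distance from `1` to `H x⁻¹`
(`dTil_coset_eq`). The estimate above, applied at the point `1`, then concludes.
-/

/-- A pseudometric on a set `S`. -/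
def IsPseudometric {S : Type*} (d : S → S → ℝ) : Prop :=
  (∀ x, d x x = 0) ∧ (∀ x y, d x y = d y x) ∧ ∀ x y z, d x z ≤ d x y + d y z

/-- The Hausdorff-type distance `d̃(A,B)` associated with a (bounded) pseudometric `d`. -/
noncomputable def dTil {S : Type*} (d : S → S → ℝ) (A B : Set S) : ℝ :=
  max (⨆ a : A, ⨅ b : B, d a b) (⨆ b : B, ⨅ a : A, d a b)

section Hausdorff

variable {S : Type*} {d : S → S → ℝ}

theorem IsPseudometric.nonneg (hpm : IsPseudometric d) (x y : S) : 0 ≤ d x y := by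
  have h := hpm.2.2 x y x
  rw [hpm.1, hpm.2.1 y x] at h
  linarith

theorem IsPseudometric.bddBelow (hpm : IsPseudometric d) (x : S) (B : Set S) :
    BddBelow (Set.range fun b : B => d x b) :=
  ⟨0, by rintro _ ⟨b, rfl⟩; exact hpm.nonneg _ _⟩

theorem dTil_symm (hpm : IsPseudometric d) (A B : Set S) : dTil d A B = dTil d B A := by
  unfold dTil
  rw [max_comm]
  simp only [hpm.2.1]

theorem dTil_self (hpm : IsPseudometric d) (A : Set S) (hA : A.Nonempty) : dTil d A A = 0 := by
  have : Nonempty A := hA.to_subtype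
  have h1 : ∀ a : A, ⨅ b : A, d a b = 0 := fun a =>
    le_antisymm ((ciInf_le (hpm.bddBelow _ A) a).trans (hpm.1 _).le)
      (le_ciInf fun b => hpm.nonneg _ _)
  have h2 : ∀ a : A, ⨅ b : A, d b a = 0 := fun a => by
    simpa only [hpm.2.1] using h1 a
  simp [dTil, h1, h2]

theorem iInf_le_dTil (hpm : IsPseudometric d) (hbdd : ∃ C : ℝ, ∀ x y, d x y ≤ C)
    (A B : Set S) (hB : B.Nonempty) (a : S) (ha : a ∈ A) :
    ⨅ b : B, d a b ≤ dTil d A B := by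
  obtain ⟨C, hC⟩ := hbdd
  obtain ⟨b₀, hb₀⟩ := hB
  have hb : BddAbove (Set.range fun a : A => ⨅ b : B, d a b) := by
    refine ⟨C, ?_⟩
    rintro _ ⟨x, rfl⟩
    exact (ciInf_le (hpm.bddBelow _ B) ⟨b₀, hb₀⟩).trans (hC _ _)
  exact (le_ciSup hb ⟨a, ha⟩).trans (le_max_left _ _)

theorem iInf_le_iInf_add_dTil (hpm : IsPseudometric d) (hbdd : ∃ C : ℝ, ∀ x y, d x y ≤ C)
    (B C : Set S) (hB : B.Nonempty) (hC : C.Nonempty) (x : S) :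
    ⨅ c : C, d x c ≤ (⨅ b : B, d x b) + dTil d B C := by
  have : Nonempty B := hB.to_subtype
  have : Nonempty C := hC.to_subtype
  rw [← sub_le_iff_le_add]
  refine le_ciInf fun b => ?_
  have h1 := iInf_le_dTil hpm hbdd B C hC b b.2
  have h2 : (⨅ c : C, d x c) - d x b ≤ ⨅ c : C, d b c := by
    refine le_ciInf fun c => ?_
    have h3 := ciInf_le (hpm.bddBelow x C) c
    have h4 := hpm.2.2 x b c
    linarith
  linarith

theorem dTil_triangle (hpm : IsPseudometric d) (hbdd : ∃ C : ℝ, ∀ x y, d x y ≤ C)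
    (A B C : Set S) (hA : A.Nonempty) (hB : B.Nonempty) (hC : C.Nonempty) :
    dTil d A C ≤ dTil d A B + dTil d B C := by
  have : Nonempty A := hA.to_subtype
  have : Nonempty C := hC.to_subtype
  refine max_le (ciSup_le fun a => ?_) (ciSup_le fun c => ?_)
  · have h1 := iInf_le_iInf_add_dTil hpm hbdd B C hB hC a
    have h2 := iInf_le_dTil hpm hbdd A B hB a a.2
    linarith
  · have h1 := iInf_le_iInf_add_dTil hpm hbdd B A hB hA c
    have h2 := iInf_le_dTil hpm hbdd C B hB c c.2
    rw [dTil_symm hpm C B] at h2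
    rw [dTil_symm hpm B A] at h1
    simp only [hpm.2.1 _ (c : S)]
    linarith

end Hausdorff

theorem iInf_image_eq {S T : Type*} (f : S → T) (A : Set S) (g : T → ℝ) :
    ⨅ b : f '' A, g b = ⨅ a : A, g (f a) :=
  (Set.imageFactorization_surjective (f := f) (s := A)).iInf_comp (fun b : f '' A => g b) |>.symm

theorem iSup_image_eq {S T : Type*} (f : S → T) (A : Set S) (g : T → ℝ) :
    ⨆ b : f '' A, g b = ⨆ a : A, g (f a) :=
  (Set.imageFactorization_surjective (f := f) (s := A)).iSup_comp (fun b : f '' A => g b) |>.symm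

theorem dTil_image {S T : Type*} (d : T → T → ℝ) (f : S → T) (A B : Set S) :
    dTil d (f '' A) (f '' B) = dTil (fun x y => d (f x) (f y)) A B := by
  unfold dTil
  rw [iSup_image_eq f A (fun a => ⨅ b : f '' B, d a b),
    iSup_image_eq f B (fun b => ⨅ a : f '' A, d a b)]
  congr 1
  · exact iSup_congr fun a => iInf_image_eq f B _
  · exact iSup_congr fun b => iInf_image_eq f A (fun a => d a (f b))

/-- Both halves of the maximum defining `dTil d H (x H)` are suprema of a constant, namely of the
distance from `x` to `H`; this is also the distance from `1` to `H x⁻¹`. -/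
theorem dTil_coset_eq {G : Type*} [Group G] (H : Subgroup G)
    (d : G → G → ℝ) (hpm : IsPseudometric d)
    (hri : ∀ a x y : G, d (x * a) (y * a) = d x y) (x : G) :
    dTil d (H : Set G) ((fun h => x * h) '' (H : Set G)) =
      ⨅ b : ((fun h => h * x⁻¹) '' (H : Set G)), d 1 b := by
  have hR : ⨅ b : ((fun h => h * x⁻¹) '' (H : Set G)), d 1 b = ⨅ k : H, d x k := by
    rw [iInf_image_eq (fun h => h * x⁻¹) (H : Set G) (d 1)]
    refine iInf_congr fun k => ?_
    rw [← hri x]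
    simp
  have h1 : ∀ h : H, ⨅ b : ((fun h => x * h) '' (H : Set G)), d h b = ⨅ k : H, d x k := by
    intro h
    rw [iInf_image_eq (fun h => x * h) (H : Set G) (d h)]
    have hs : Function.Surjective fun k : H => h * k⁻¹ := fun k => ⟨k⁻¹ * h, by simp⟩
    rw [← hs.iInf_comp (fun k : H => d x k)]
    refine iInf_congr fun k => ?_
    rw [hpm.2.1, ← hri (k : G)⁻¹]
    simp
  have h2 : ∀ k : H, ⨅ a : H, d a (x * k) = ⨅ k : H, d x k := by
    intro k
    have hs : Function.Surjective fun a : H => a * k⁻¹ := fun a => ⟨a * k, by simp⟩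
    rw [← hs.iInf_comp (fun k : H => d x k)]
    refine iInf_congr fun a => ?_
    rw [hpm.2.1, ← hri (k : G)⁻¹]
    simp
  have e1 : (⨆ h : (H : Set G), ⨅ b : ((fun h => x * h) '' (H : Set G)), d h b) =
      ⨅ k : H, d x k := (iSup_congr h1).trans (ciSup_const (ι := H))
  have e2 : (⨆ b : ((fun h => x * h) '' (H : Set G)), ⨅ h : (H : Set G), d h b) =
      ⨅ k : H, d x k := by
    rw [iSup_image_eq (fun h => x * h) (H : Set G) (fun b => ⨅ h : (H : Set G), d h b)]
    exact (iSup_congr h2).trans (ciSup_const (ι := H))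
  rw [hR, dTil, e1, e2, max_self]

/-- `H (x h)⁻¹ = H x⁻¹` for `h ∈ H`. -/
theorem image_mul_inv_of_mem {G : Type*} [Group G] (H : Subgroup G) (x h : G) (hh : h ∈ H) :
    (fun g => g * (x * h)⁻¹) '' (H : Set G) = (fun g => g * x⁻¹) '' (H : Set G) := by
  ext z
  constructor
  · rintro ⟨g, hg, rfl⟩
    exact ⟨g * h⁻¹, H.mul_mem hg (H.inv_mem hh), by simp [mul_assoc]⟩
  · rintro ⟨g, hg, rfl⟩
    exact ⟨g * h, H.mul_mem hg hh, by simp [mul_assoc]⟩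

/-- For a bounded right invariant pseudometric `d` on a group `G` and a subgroup `H`,
the function `d′(x,y) := d̃(Hx⁻¹, Hy⁻¹)` is a left invariant pseudometric, constant on left
cosets of `H` in each variable, and `|d̃(H,xH) − d̃(H,yH)| ≤ d′(x,y)` for all `x, y ∈ G`. -/
theorem dTil_inverse_coset_pseudometric
    {G : Type*} [Group G] (H : Subgroup G)
    (d : G → G → ℝ) (hpm : IsPseudometric d)
    (hbdd : ∃ C : ℝ, ∀ x y, d x y ≤ C)
    (hri : ∀ a x y : G, d (x * a) (y * a) = d x y)
    (d' : G → G → ℝ)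
    (hd' : ∀ x y : G, d' x y =
      dTil d ((fun h => h * x⁻¹) '' (H : Set G)) ((fun h => h * y⁻¹) '' (H : Set G))) :
    IsPseudometric d' ∧
    (∀ a x y : G, d' (a * x) (a * y) = d' x y) ∧
    (∀ x y : G, ∀ h ∈ H, ∀ k ∈ H, d' (x * h) (y * k) = d' x y) ∧
    ∀ x y : G,
      |dTil d (H : Set G) ((fun h => x * h) '' (H : Set G)) -
         dTil d (H : Set G) ((fun h => y * h) '' (H : Set G))| ≤ d' x y := by
  have hne : ∀ x : G, ((fun h => h * x⁻¹) '' (H : Set G)).Nonempty :=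
    fun x => ⟨_, 1, H.one_mem, rfl⟩
  refine ⟨⟨fun x => ?_, fun x y => ?_, fun x y z => ?_⟩, fun a x y => ?_,
    fun x y h hh k hk => ?_, fun x y => ?_⟩
  · rw [hd', dTil_self hpm _ (hne x)]
  · rw [hd', hd', dTil_symm hpm]
  · rw [hd', hd', hd']
    exact dTil_triangle hpm hbdd _ _ _ (hne x) (hne y) (hne z)
  · have ht : ∀ z : G, (fun h => h * (a * z)⁻¹) '' (H : Set G) =
        (fun g => g * a⁻¹) '' ((fun h => h * z⁻¹) '' (H : Set G)) := fun z => by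
      rw [Set.image_image]
      simp only [mul_inv_rev, mul_assoc]
    rw [hd', hd', ht, ht, dTil_image]
    simp only [hri]
  · rw [hd', hd', image_mul_inv_of_mem H x h hh, image_mul_inv_of_mem H y k hk]
  · rw [dTil_coset_eq H d hpm hri, dTil_coset_eq H d hpm hri, hd', abs_sub_le_iff]
    have h1 := iInf_le_iInf_add_dTil hpm hbdd _ _ (hne x) (hne y) 1
    have h2 := iInf_le_iInf_add_dTil hpm hbdd _ _ (hne y) (hne x) 1
    rw [dTil_symm hpm] at h2
    constructor <;> linarith
end

section
/- Let S be a set, d a pseudometric on S, r > 0, ε > 0, and let f : S → ℝ be bounded above with f ≥ 0 and f(x) − f(y) ≤ ε + r·d(x,y) for all x, y ∈ S. Define f₀(y) := sup_{x∈S} max(f(x) − ε − r·d(x,y), 0). Then f(y) − ε ≤ f₀(y) ≤ f(y) for all y ∈ S, and f₀ is r-Lipschitz with respect to d, i.e., |f₀(y) − f₀(y′)| ≤ r·d(y, y′) for all y, y′ ∈ S. -/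
/-- Lipschitz approximation: if `f ≥ 0` is bounded above and satisfies
`f(x) − f(y) ≤ ε + r·d(x,y)`, then `f₀(y) := sup_x max(f(x) − ε − r·d(x,y), 0)` satisfies
`f − ε ≤ f₀ ≤ f` and `f₀` is `r`-Lipschitz with respect to `d`. -/
theorem lipschitz_approximation
    {S : Type*} (d : S → S → ℝ) (hpm : IsPseudometric d)
    (r ε : ℝ) (hr : 0 < r) (hε : 0 < ε)
    (f : S → ℝ) (hub : ∃ M : ℝ, ∀ x, f x ≤ M) (hf0 : ∀ x, 0 ≤ f x)
    (hlip : ∀ x y : S, f x - f y ≤ ε + r * d x y)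
    (f₀ : S → ℝ) (hf₀ : ∀ y : S, f₀ y = ⨆ x : S, max (f x - ε - r * d x y) 0) :
    (∀ y : S, f y - ε ≤ f₀ y ∧ f₀ y ≤ f y) ∧
    ∀ y y' : S, |f₀ y - f₀ y'| ≤ r * d y y' := by
  obtain ⟨hd0, hsymm, htri⟩ := hpm
  have hterm : ∀ x y : S, max (f x - ε - r * d x y) 0 ≤ f y := fun x y =>
    max_le (by linarith [hlip x y]) (hf0 y)
  -- The approximate Lipschitz condition bounds the family defining `f₀ y` by `f y`,
  -- so the real supremum does not take its junk value.
  have hle : ∀ x y : S, max (f x - ε - r * d x y) 0 ≤ f₀ y := fun x y => by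
    rw [hf₀ y]
    exact le_ciSup (f := fun x => max (f x - ε - r * d x y) 0)
      ⟨f y, Set.forall_mem_range.2 fun x => hterm x y⟩ x
  have hd : ∀ x y : S, 0 ≤ d x y := fun x y => by
    linarith [htri x y x, hsymm x y, hd0 x]
  have hshift : ∀ y y' : S, f₀ y ≤ f₀ y' + r * d y y' := fun y y' => by
    have : Nonempty S := ⟨y⟩
    rw [hf₀ y]
    refine ciSup_le fun x => max_le ?_ ?_
    · have h1 := (le_max_left _ _).trans (hle x y')
      have h2 := mul_le_mul_of_nonneg_left (htri x y y') hr.le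
      linarith
    · have h1 := (le_max_right _ _).trans (hle y y')
      have h2 := mul_nonneg hr.le (hd y y')
      linarith
  refine ⟨fun y => ⟨?_, ?_⟩, fun y y' => ?_⟩
  · have h := (le_max_left _ _).trans (hle y y)
    rw [hd0 y] at h
    linarith
  · have : Nonempty S := ⟨y⟩
    rw [hf₀ y]
    exact ciSup_le fun x => hterm x y
  · have h := hshift y' y
    rw [hsymm y' y] at h
    exact abs_le.2 ⟨by linarith, by linarith [hshift y y']⟩
end

section
/- Let S be a set, P a point-separating family of pseudometrics on S, X the uniform space on S induced by P, and Y a uniform space on S coarser than X (the identity map X → Y is uniformly continuous). Assume that for every d ∈ P and z ∈ S the function x ↦ d(x,z) is uniformly continuous on Y. Let μ be a uniform measure on X, f ∈ U_b(X) with f ≥ 0, and ε > 0. Then there exists g ∈ U_b(Y) with 0 ≤ g ≤ f and |μ(f) − μ(g)| < ε. -/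
/-!
Given `δ > 0`, uniform continuity and boundedness of `f` provide a finite sum of elements of `P`,
scaled to a pseudometric `D`, with `f z - δ - D x z ≤ f x` for all `x, z`. For `A ⊆ S` put
`G A x = max (0, sup_{z ∈ A} (f z - δ - D x z))` (`lowerEnvelope`). Then:

* `0 ≤ G A ≤ f`, and `f - δ ≤ G S`, so `μ (G S)` is close to `μ f` because `μ` is norm-bounded;
* for finite `A`, `G A` is a finite maximum of functions uniformly continuous on `Y`;
* all `G A` are `D`-Lipschitz and bounded by the same constant, hence lie in one UEB set, and
  `G A → G S` pointwise along the finite sets `A`. Hence `μ (G A) → μ (G S)`.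

So `g = G A` works for a large enough finite `A`.
-/

open Topology Filter

/-- The coarsest uniformity (as a filter on `S × S`) making each pseudometric in `P`
uniformly continuous: it is generated by the entourages `{(x,y) : d(x,y) < ε}`. -/
def pseudometricUniformity {S : Type*} (P : Set (S → S → ℝ)) : Filter (S × S) :=
  ⨅ d ∈ P, ⨅ ε ∈ Set.Ioi (0 : ℝ), Filter.principal {p : S × S | d p.1 p.2 < ε}

/-- `P` separates the points of `S`. -/
def SeparatesPoints' {S : Type*} (P : Set (S → S → ℝ)) : Prop :=
  ∀ x y : S, x ≠ y → ∃ d ∈ P, 0 < d x y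

/-- The bounded uniformly continuous real-valued functions on `S` for the uniformity `u`. -/
def Ub {S : Type*} (u : UniformSpace S) : Set (S → ℝ) :=
  {f | @UniformContinuous S ℝ u _ f ∧ ∃ C : ℝ, ∀ x, |f x| ≤ C}

/-- A set of functions is UEB for `u` if it is uniformly equicontinuous (w.r.t. `u`) and
uniformly bounded. -/
def IsUEB {S : Type*} (u : UniformSpace S) (H : Set (S → ℝ)) : Prop :=
  (@UniformEquicontinuous (↥H) ℝ S _ u fun f => (f : S → ℝ)) ∧
  ∃ C : ℝ, ∀ f ∈ H, ∀ x, |f x| ≤ C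

/-- A uniform measure on `S` with uniformity `u`: a sup-norm-bounded linear functional on
`Ub u` whose restriction to every UEB set is continuous in the topology of pointwise
convergence (the product topology on `S → ℝ`). -/
def IsUniformMeasure {S : Type*} (u : UniformSpace S) (μ : (S → ℝ) → ℝ) : Prop :=
  (∀ f ∈ Ub u, ∀ g ∈ Ub u, μ (f + g) = μ f + μ g) ∧
  (∀ f ∈ Ub u, ∀ c : ℝ, μ (c • f) = c * μ f) ∧
  (∃ C : ℝ, ∀ f ∈ Ub u, ∀ B : ℝ, (∀ x, |f x| ≤ B) → |μ f| ≤ C * B) ∧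
  (∀ H : Set (S → ℝ), H ⊆ Ub u → IsUEB u H → ContinuousOn μ H)

/-! ### Lower envelopes by translates of a pseudometric -/

/-- The maximum of `0` and the functions `x ↦ f z - δ - D x z`, `z ∈ A`. Adjoining `0` gives the
nonnegative part and also keeps the supremum over `A = ∅` meaningful. -/
noncomputable def lowerEnvelope {S : Type*} (D : S → S → ℝ) (f : S → ℝ) (δ : ℝ) (A : Set S)
    (x : S) : ℝ :=
  sSup (insert 0 ((fun z => f z - δ - D x z) '' A))

section Envelope

variable {S : Type*} {D : S → S → ℝ} {f : S → ℝ} {δ : ℝ}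

theorem lowerEnvelope_le {A : Set S} {x : S} {c : ℝ} (hc : 0 ≤ c)
    (h : ∀ z ∈ A, f z - δ - D x z ≤ c) : lowerEnvelope D f δ A x ≤ c := by
  refine csSup_le (Set.insert_nonempty _ _) ?_
  rintro _ (rfl | ⟨z, hz, rfl⟩)
  · exact hc
  · exact h z hz

theorem lowerEnvelope_bddAbove (hf0 : ∀ x, 0 ≤ f x) (hD : ∀ x z, f z - δ - D x z ≤ f x)
    (A : Set S) (x : S) : BddAbove (insert 0 ((fun z => f z - δ - D x z) '' A)) := by
  refine ⟨f x, ?_⟩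
  rintro _ (rfl | ⟨z, hz, rfl⟩)
  · exact hf0 x
  · exact hD x z

theorem lowerEnvelope_nonneg (hf0 : ∀ x, 0 ≤ f x) (hD : ∀ x z, f z - δ - D x z ≤ f x)
    (A : Set S) (x : S) : 0 ≤ lowerEnvelope D f δ A x :=
  le_csSup (lowerEnvelope_bddAbove hf0 hD A x) (Set.mem_insert _ _)

theorem le_lowerEnvelope (hf0 : ∀ x, 0 ≤ f x) (hD : ∀ x z, f z - δ - D x z ≤ f x)
    {A : Set S} (x : S) {z : S} (hz : z ∈ A) : f z - δ - D x z ≤ lowerEnvelope D f δ A x :=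
  le_csSup (lowerEnvelope_bddAbove hf0 hD A x) (Set.mem_insert_of_mem _ ⟨z, hz, rfl⟩)

theorem lowerEnvelope_lipschitz (hf0 : ∀ x, 0 ≤ f x) (hD : ∀ x z, f z - δ - D x z ≤ f x)
    (hps : IsPseudometric D) (A : Set S) (x y : S) :
    |lowerEnvelope D f δ A x - lowerEnvelope D f δ A y| ≤ D x y := by
  obtain ⟨h0, hs, ht⟩ := hps
  have hnn : ∀ x y, 0 ≤ D x y := fun x y => by
    linarith [ht x y x, h0 x, hs x y]
  have key : ∀ x y, lowerEnvelope D f δ A x ≤ lowerEnvelope D f δ A y + D x y := fun x y => by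
    refine lowerEnvelope_le (add_nonneg (lowerEnvelope_nonneg hf0 hD A y) (hnn x y)) ?_
    intro z hz
    linarith [le_lowerEnvelope hf0 hD y hz, ht y x z, hs x y]
  rw [abs_le]
  constructor <;> linarith [key x y, key y x, hs x y]

theorem lowerEnvelope_tendsto (hf0 : ∀ x, 0 ≤ f x) (hD : ∀ x z, f z - δ - D x z ≤ f x) :
    Tendsto (fun A : Finset S => lowerEnvelope D f δ (A : Set S)) atTop
      (𝓝 (lowerEnvelope D f δ Set.univ)) := by
  rw [tendsto_pi_nhds]
  intro x
  apply tendsto_atTop_isLUB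
  · intro A B hAB
    exact lowerEnvelope_le (lowerEnvelope_nonneg hf0 hD _ x)
      fun z hz => le_lowerEnvelope hf0 hD x (hAB hz)
  · constructor
    · rintro _ ⟨A, rfl⟩
      exact lowerEnvelope_le (lowerEnvelope_nonneg hf0 hD _ x)
        fun z _ => le_lowerEnvelope hf0 hD x (Set.mem_univ z)
    · intro c hc
      refine lowerEnvelope_le ((lowerEnvelope_nonneg hf0 hD _ x).trans (hc ⟨∅, rfl⟩)) ?_
      intro z _
      exact (le_lowerEnvelope hf0 hD x (by simp)).trans (hc ⟨{z}, rfl⟩)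

theorem lowerEnvelope_uniformContinuous [UniformSpace S] (hf0 : ∀ x, 0 ≤ f x)
    (hD : ∀ x z, f z - δ - D x z ≤ f x) (hu : ∀ z, UniformContinuous fun x => D x z)
    (A : Finset S) : UniformContinuous (lowerEnvelope D f δ (A : Set S)) := by
  classical
  induction A using Finset.induction_on with
  | empty =>
    have : lowerEnvelope D f δ ((∅ : Finset S) : Set S) = fun _ => 0 := by
      funext x
      simp [lowerEnvelope]
    rw [this]
    exact uniformContinuous_const
  | insert a A _ ih =>
    have : lowerEnvelope D f δ ((insert a A : Finset S) : Set S) =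
        fun x => max (f a - δ - D x a) (lowerEnvelope D f δ (A : Set S) x) := by
      funext x
      unfold lowerEnvelope
      rw [Finset.coe_insert, Set.image_insert_eq, Set.insert_comm,
        csSup_insert (lowerEnvelope_bddAbove hf0 hD _ x) (Set.insert_nonempty _ _)]
    rw [this]
    exact lipschitzWith_max.uniformContinuous.comp
      ((uniformContinuous_const.sub (hu a)).prodMk ih)

end Envelope

/-! ### Entourages of the uniformity induced by `P` -/

/-- The sets containing some `{p | ∀ d ∈ F, d p.1 p.2 < η}` with `F ⊆ P` finite and `η > 0` form a
filter, and it is at most `pseudometricUniformity P`. -/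
theorem exists_finset_of_mem_pseudometricUniformity {S : Type*} {P : Set (S → S → ℝ)}
    {U : Set (S × S)} (hU : U ∈ pseudometricUniformity P) :
    ∃ F : Finset (S → S → ℝ), (∀ d ∈ F, d ∈ P) ∧ ∃ η > (0 : ℝ),
      ∀ p : S × S, (∀ d ∈ F, d p.1 p.2 < η) → p ∈ U := by
  classical
  let L : Filter (S × S) :=
    { sets := {U | ∃ F : Finset (S → S → ℝ), (∀ d ∈ F, d ∈ P) ∧ ∃ η > (0 : ℝ),
        ∀ p : S × S, (∀ d ∈ F, d p.1 p.2 < η) → p ∈ U}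
      univ_sets := ⟨∅, by simp, 1, one_pos, by simp⟩
      sets_of_superset := by
        rintro U V ⟨F, hF, η, hη, h⟩ hUV
        exact ⟨F, hF, η, hη, fun p hp => hUV (h p hp)⟩
      inter_sets := by
        rintro U V ⟨F, hF, η, hη, h⟩ ⟨F', hF', η', hη', h'⟩
        refine ⟨F ∪ F', ?_, min η η', lt_min hη hη', fun p hp => ⟨h p ?_, h' p ?_⟩⟩
        · intro d hd
          rcases Finset.mem_union.1 hd with hd | hd
          exacts [hF d hd, hF' d hd]
        · exact fun d hd => (hp d (Finset.mem_union_left _ hd)).trans_le (min_le_left _ _)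
        · exact fun d hd => (hp d (Finset.mem_union_right _ hd)).trans_le (min_le_right _ _) }
  have hL : L ≤ pseudometricUniformity P := by
    refine le_iInf₂ fun d hd => le_iInf₂ fun η hη => ?_
    rw [le_principal_iff]
    exact ⟨{d}, by simpa using hd, η, hη, fun p hp => hp d (by simp)⟩
  exact hL hU

/-- A scaled finite sum of elements of `P` is uniformly continuous: each set on which it is `< r`
is an entourage. -/
theorem sum_lt_mem_pseudometricUniformity {S : Type*} {P : Set (S → S → ℝ)}
    (F : Finset (S → S → ℝ)) (hF : ∀ d ∈ F, d ∈ P) {K : ℝ} (hK : 0 ≤ K) {r : ℝ} (hr : 0 < r) :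
    {p : S × S | K * ∑ d ∈ F, d p.1 p.2 < r} ∈ pseudometricUniformity P := by
  set t : ℝ := r / ((K + 1) * (F.card + 1)) with ht
  have htpos : 0 < t := by positivity
  have hmem : ∀ d ∈ F, {p : S × S | d p.1 p.2 < t} ∈ pseudometricUniformity P := fun d hd =>
    (iInf₂_le_of_le d (hF d hd) (iInf₂_le t htpos) :
      pseudometricUniformity P ≤ principal {p : S × S | d p.1 p.2 < t}) (mem_principal_self _)
  filter_upwards [(biInter_finset_mem F).2 hmem] with p hp
  simp only [Set.mem_iInter, Set.mem_ofPred_eq] at hp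
  have h1 : ∑ d ∈ F, d p.1 p.2 ≤ F.card * t := by
    simpa using Finset.sum_le_card_nsmul F (fun d => d p.1 p.2) t fun d hd => (hp d hd).le
  have h2 : r = (K + 1) * (F.card + 1) * t := by
    rw [ht]
    field_simp
  have h3 : K * ∑ d ∈ F, d p.1 p.2 ≤ K * (F.card * t) := mul_le_mul_of_nonneg_left h1 hK
  have h4 : 0 ≤ K * t := mul_nonneg hK htpos.le
  have h5 : 0 ≤ (F.card : ℝ) * t := mul_nonneg (Nat.cast_nonneg _) htpos.le
  change K * ∑ d ∈ F, d p.1 p.2 < r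
  nlinarith

/-! ### UEB sets of Lipschitz functions -/

/-- The functions bounded by `C` in absolute value and `1`-Lipschitz for `D`. -/
def lipBall {S : Type*} (D : S → S → ℝ) (C : ℝ) : Set (S → ℝ) :=
  {h | (∀ x, |h x| ≤ C) ∧ ∀ x y, |h x - h y| ≤ D x y}

theorem lipBall_isUEB {S : Type*} (u : UniformSpace S) {D : S → S → ℝ} (C : ℝ)
    (hD : ∀ r > 0, {p : S × S | D p.1 p.2 < r} ∈ @uniformity S u) : IsUEB u (lipBall D C) := by
  refine ⟨?_, C, fun h hh => hh.1⟩
  rw [Metric.uniformEquicontinuous_iff_right]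
  intro r hr
  filter_upwards [hD r hr] with p hp h
  exact (h.2.2 p.1 p.2).trans_lt hp

theorem IsUEB.subset_Ub {S : Type*} {u : UniformSpace S} {H : Set (S → ℝ)} (hH : IsUEB u H) :
    H ⊆ Ub u := by
  intro h hh
  obtain ⟨h1, C, hC⟩ := hH
  exact ⟨h1.uniformContinuous ⟨h, hh⟩, C, hC h hh⟩

/-! ### Approximation from below -/

/-- The pseudometric that controls `f` up to `δ`: below distance `|C|` all `d ∈ F` are `< η`, and
beyond it the bound is trivial since `0 ≤ f ≤ |C|`. -/
theorem exists_controlling_pseudometric {S : Type*} {P : Set (S → S → ℝ)}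
    (hP : ∀ d ∈ P, IsPseudometric d) (uX : UniformSpace S)
    (hX : @uniformity S uX = pseudometricUniformity P) {f : S → ℝ} (hf : f ∈ Ub uX)
    (hf0 : ∀ x, 0 ≤ f x) {δ : ℝ} (hδ : 0 < δ) :
    ∃ F : Finset (S → S → ℝ), (∀ d ∈ F, d ∈ P) ∧ ∃ K : ℝ, 0 ≤ K ∧
      ∀ x z, f z - δ - K * ∑ d ∈ F, d x z ≤ f x := by
  obtain ⟨hfu, C, hC⟩ := hf
  have hmem : {p : S × S | dist (f p.1) (f p.2) < δ} ∈ @uniformity S uX :=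
    hfu (Metric.dist_mem_uniformity hδ)
  rw [hX] at hmem
  obtain ⟨F, hF, η, hη, h⟩ := exists_finset_of_mem_pseudometricUniformity hmem
  refine ⟨F, hF, |C| / η, by positivity, fun x z => ?_⟩
  rcases le_or_gt |C| (|C| / η * ∑ d ∈ F, d x z) with hle | hlt
  · linarith [hf0 x, hC z, le_abs_self (f z), le_abs_self C]
  · have hnn : ∀ d ∈ F, 0 ≤ d x z := fun d hd => by
      obtain ⟨h0, hs, ht⟩ := hP d (hF d hd)
      linarith [ht x z x, h0 x, hs x z]
    have hsum : |C| / η * ∑ d ∈ F, d x z < |C| / η * η := by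
      rwa [div_mul_cancel₀ _ hη.ne']
    have hsum' := lt_of_mul_lt_mul_left hsum (by positivity)
    have := h (x, z) fun d hd =>
      (Finset.single_le_sum (f := fun d => d x z) hnn hd).trans_lt hsum'
    have h2 : |f x - f z| < δ := this
    have h3 : 0 ≤ |C| / η * ∑ d ∈ F, d x z :=
      mul_nonneg (by positivity) (Finset.sum_nonneg hnn)
    linarith [(abs_lt.1 h2).1]

/-- Key approximation lemma: if `X` is induced by a point-separating family `P` of
pseudometrics, `Y` is coarser than `X`, and every `d(·,z)` (`d ∈ P`) is uniformly continuous
on `Y`, then for every uniform measure `μ` on `X`, every `f ∈ U_b(X)` with `f ≥ 0` and every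
`ε > 0` there is `g ∈ U_b(Y)` with `0 ≤ g ≤ f` and `|μ(f) − μ(g)| < ε`. -/
theorem uniform_measure_approximation
    {S : Type*} (P : Set (S → S → ℝ)) (hP : ∀ d ∈ P, IsPseudometric d)
    (hsep : SeparatesPoints' P)
    (uX uY : UniformSpace S)
    (hX : @uniformity S uX = pseudometricUniformity P)
    (hcoarse : @UniformContinuous S S uX uY id)
    (hfun : ∀ d ∈ P, ∀ z : S, @UniformContinuous S ℝ uY _ fun x => d x z)
    (μ : (S → ℝ) → ℝ) (hμ : IsUniformMeasure uX μ)
    (f : S → ℝ) (hf : f ∈ Ub uX) (hf0 : ∀ x, 0 ≤ f x)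
    (ε : ℝ) (hε : 0 < ε) :
    ∃ g ∈ Ub uY, (∀ x, 0 ≤ g x) ∧ (∀ x, g x ≤ f x) ∧ |μ f - μ g| < ε := by
  classical
  obtain ⟨hadd, -, ⟨M, hM⟩, hcont⟩ := hμ
  set δ : ℝ := ε / (2 * (|M| + 1)) with hδ
  have hδpos : 0 < δ := by positivity
  obtain ⟨F, hF, K, hK, hDf⟩ := exists_controlling_pseudometric hP uX hX hf hf0 hδpos
  obtain ⟨hfu, C, hC⟩ := hf
  set D : S → S → ℝ := fun x z => K * ∑ d ∈ F, d x z with hDdef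
  have hD : ∀ x z, f z - δ - D x z ≤ f x := hDf
  have hps : IsPseudometric D := by
    refine ⟨fun x => ?_, fun x y => ?_, fun x y z => ?_⟩
    · simp only [hDdef]
      rw [Finset.sum_eq_zero fun d hd => (hP d (hF d hd)).1 x, mul_zero]
    · simp only [hDdef]
      rw [Finset.sum_congr rfl fun d hd => (hP d (hF d hd)).2.1 x y]
    · simp only [hDdef]
      rw [← mul_add, ← Finset.sum_add_distrib]
      exact mul_le_mul_of_nonneg_left
        (Finset.sum_le_sum fun d hd => (hP d (hF d hd)).2.2 x y z) hK
  have hDY : ∀ z, @UniformContinuous S ℝ uY _ fun x => D x z := by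
    intro z
    let := uY
    have hsum : ∀ F' : Finset (S → S → ℝ), (∀ d ∈ F', d ∈ P) →
        UniformContinuous fun x => ∑ d ∈ F', d x z := by
      intro F'
      induction F' using Finset.induction_on with
      | empty => intro _; simpa using uniformContinuous_const
      | insert a F' ha ih =>
        intro h
        simp only [Finset.sum_insert ha]
        exact (hfun a (h a (by simp)) z).add (ih fun d hd => h d (by simp [hd]))
    exact (hsum F hF).const_smul K
  set G := lowerEnvelope D f δ with hG
  have hGf : ∀ A x, G A x ≤ f x := fun A x => lowerEnvelope_le (hf0 x) fun z _ => hD x z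
  have hG0 : ∀ A x, 0 ≤ G A x := lowerEnvelope_nonneg hf0 hD
  have hGC : ∀ A x, |G A x| ≤ C := fun A x => by
    rw [abs_of_nonneg (hG0 A x)]
    exact (hGf A x).trans ((le_abs_self _).trans (hC x))
  have hUEB : IsUEB uX (lipBall D C) := lipBall_isUEB uX C fun r hr => by
    rw [hX]
    exact sum_lt_mem_pseudometricUniformity F hF hK hr
  have hGH : ∀ A, G A ∈ lipBall D C := fun A =>
    ⟨hGC A, lowerEnvelope_lipschitz hf0 hD hps A⟩
  have hGU : G Set.univ ∈ Ub uX := hUEB.subset_Ub (hGH _)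
  have hsubU : f - G Set.univ ∈ Ub uX := by
    let := uX
    refine ⟨hfu.sub hGU.1, C, fun x => ?_⟩
    have h1 := hGf Set.univ x
    have h2 := hG0 Set.univ x
    have h3 := (le_abs_self _).trans (hC x)
    rw [Pi.sub_apply, abs_of_nonneg (by linarith)]
    linarith
  have hclose : |μ f - μ (G Set.univ)| ≤ M * δ := by
    have h1 := hadd _ hGU _ hsubU
    rw [add_sub_cancel] at h1
    rw [h1, add_sub_cancel_left]
    refine hM _ hsubU δ fun x => ?_
    -- Taking `z = x` in the supremum gives `f x - δ ≤ G univ x`.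
    have h2 := le_lowerEnvelope hf0 hD x (Set.mem_univ x)
    rw [hps.1 x] at h2
    have h3 := hGf Set.univ x
    rw [Pi.sub_apply, abs_of_nonneg (by linarith)]
    linarith
  have hMδ : M * δ < ε / 2 := by
    have h1 : ε / 2 = (|M| + 1) * δ := by
      rw [hδ]
      field_simp
    rw [h1]
    exact mul_lt_mul_of_pos_right (by linarith [le_abs_self M]) hδpos
  have hlim : Tendsto (fun A : Finset S => μ (G (A : Set S))) atTop (𝓝 (μ (G Set.univ))) :=
    (hcont _ hUEB.subset_Ub hUEB _ (hGH _)).tendsto.comp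
      (tendsto_nhdsWithin_iff.2 ⟨lowerEnvelope_tendsto hf0 hD, .of_forall fun A => hGH _⟩)
  obtain ⟨A, hA⟩ := (Metric.tendsto_nhds.1 hlim (ε / 2) (half_pos hε)).exists
  rw [Real.dist_eq, abs_sub_comm] at hA
  refine ⟨G (A : Set S), ⟨?_, C, hGC _⟩, hG0 _, hGf _, ?_⟩
  · let := uY
    exact lowerEnvelope_uniformContinuous hf0 hD hDY A
  · linarith [abs_sub_le (μ f) (μ (G Set.univ)) (μ (G (A : Set S)))]
end
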